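/- Let (W_1, …, W_{2n+1}) be an exchangeable sequence of random elements of a measurable space 𝕎, and let s : 𝕎 × 𝕎^n → ℝ be measurable. Define S_i = s(W_i; W_1, …, W_n) for i = n+1, …, 2n+1. Then the sequence (S_{n+1}, …, S_{2n+1}) is exchangeable. -/

import Mathlib

/-!
A permutation `σ` of the `n + 1` score indices extends to a permutation `τ` of all `2n + 1` indices
that fixes the first `n` of them. The score vector is a fixed measurable function `F` of the whole
vector `W`, and since `τ` leaves the arguments `W_1, …, W_n` of every score unchanged, permuting the
scores by `σ` amounts to applying `F` to `W` permuted by `τ`. Pushing the exchangeability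
of `W` under `τ` forward along `F` gives the claim.
-/

open MeasureTheory

/-- A permutation of the last `n + 1` of `2n + 1` indices extends by the identity on the first `n`. -/
theorem exists_perm_extending_last (n : ℕ) (σ : Equiv.Perm (Fin (n+1))) :
    ∃ τ : Equiv.Perm (Fin (2*n+1)),
      (∀ j : Fin n, τ ⟨j.val, by omega⟩ = ⟨j.val, by omega⟩) ∧
      ∀ i : Fin (n+1), τ ⟨n + i.val, by omega⟩ = ⟨n + (σ i).val, by omega⟩ := by
  let e : Fin n ⊕ Fin (n+1) ≃ Fin (2*n+1) :=
    finSumFinEquiv.trans (finCongr (by omega))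
  have hl (j : Fin n) : e (Sum.inl j) = ⟨j.val, by omega⟩ := by
    ext; simp [e]
  have hr (i : Fin (n+1)) : e (Sum.inr i) = ⟨n + i.val, by omega⟩ := by
    ext; simp [e]
  refine ⟨(e.symm.trans (Equiv.sumCongr (Equiv.refl _) σ)).trans e, fun j => ?_, fun i => ?_⟩
  · rw [← hl]; simp
  · rw [← hr, ← hr]; simp

/-- If `(W_1, …, W_{2n+1})` is exchangeable and
`S_i = s(W_i; W_1, …, W_n)` for `i = n+1, …, 2n+1`, then `(S_{n+1}, …, S_{2n+1})`
is exchangeable. -/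
theorem scores_exchangeable
    {Ω 𝕎 : Type*} [MeasurableSpace Ω] [MeasurableSpace 𝕎]
    (μ : Measure Ω) [IsProbabilityMeasure μ] (n : ℕ)
    (W : Fin (2*n+1) → Ω → 𝕎) (hW : ∀ i, Measurable (W i))
    (hexch : ∀ σ : Equiv.Perm (Fin (2*n+1)),
      Measure.map (fun ω => fun i => W (σ i) ω) μ
        = Measure.map (fun ω => fun i => W i ω) μ)
    (s : 𝕎 → (Fin n → 𝕎) → ℝ) (hs : Measurable (Function.uncurry s))
    (S : Fin (n+1) → Ω → ℝ)
    (hS : ∀ i ω, S i ω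
      = s (W ⟨n + i.val, by have := i.isLt; omega⟩ ω)
          (fun j => W ⟨j.val, by have := j.isLt; omega⟩ ω)) :
    ∀ σ : Equiv.Perm (Fin (n+1)),
      Measure.map (fun ω => fun i => S (σ i) ω) μ
        = Measure.map (fun ω => fun i => S i ω) μ := by
  intro σ
  obtain ⟨τ, hτl, hτr⟩ := exists_perm_extending_last n σ
  let F : (Fin (2*n+1) → 𝕎) → Fin (n+1) → ℝ := fun w i =>
    s (w ⟨n + i.val, by omega⟩) (fun j => w ⟨j.val, by omega⟩)
  have hF : Measurable F := by
    refine measurable_pi_lambda _ fun i => ?_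
    have hpair : Measurable fun w : Fin (2*n+1) → 𝕎 =>
        (w ⟨n + i.val, by omega⟩, fun j : Fin n => w ⟨j.val, by omega⟩) :=
      (measurable_pi_apply _).prodMk (measurable_pi_lambda _ fun j => measurable_pi_apply _)
    exact hs.comp hpair
  have hperm : (fun ω => fun i => S (σ i) ω) = F ∘ fun ω => fun i => W (τ i) ω := by
    funext ω i
    simp only [F, Function.comp_apply, hS, hτl, hτr]
  have hid : (fun ω => fun i => S i ω) = F ∘ fun ω => fun i => W i ω := by
    funext ω i
    simp only [F, Function.comp_apply, hS]
  rw [hperm, hid, ← Measure.map_map hF (measurable_pi_lambda _ fun i => hW (τ i)),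
    ← Measure.map_map hF (measurable_pi_lambda _ hW), hexch τ]
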